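/- Let 1 < σ < 2, z₀ ∈ (−1,1), ω₀ > 0 and ω = (ω₀, 2z₀√ω₀) (so ω ∈ Ω). Let d : ℝ² → ℝ be three times continuously differentiable on a neighborhood U ⊆ Ω of ω, and suppose that for every ω' = (ω₀',ω₁') ∈ U the second-order partial derivatives of d satisfy ∂²_{ω₀} d(ω') = (κ̃_{ω'}/ω₀'^{1/2})(2ω₁'² − 8(σ−1)ω₀') α_{0,ω'} − (κ̃_{ω'}/ω₀') κ_{ω'}² ω₁' α_{1,ω'}, ∂²_{ω₁} d(ω') = ω₀' ∂²_{ω₀} d(ω'), and ∂_{ω₀}∂_{ω₁} d(ω') = 4 κ̃_{ω'} ω₁' (σ−2) ω₀'^{1/2} α_{0,ω'} + 2 κ̃_{ω'} κ_{ω'}² α_{1,ω'}. Assume further that the determinant of the Hessian matrix d''(ω) is zero, and set ξ = (−ω₀ ∂²_{ω₀} d(ω), ∂_{ω₀}∂_{ω₁} d(ω)). Then the third derivative of λ ↦ d(ω + λξ) at λ = 0 is nonzero. -/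

import Mathlib

/-!
After the substitution `y = σ κ x` the Hessian entries depend on `z = ω₁ / (2 √ω₀)` only through
`A_n(z) = ∫₀^∞ (cosh y - z)^(-1/σ - n) dy`: up to a common positive factor, `∂²_{ω₀} d` is `P(z)`,
`∂_{ω₀}∂_{ω₁} d` is `√ω₀ Q(z)` and `∂²_{ω₁} d` is `ω₀ P(z)` (`entry00`, `entry01`).
The vanishing of the determinant therefore means `P = e Q` with `e = 1` or `e = -1`.

Write `a = √ω₀` at the base point and `b = √ω₀'`, `z` at the moving point `ω + λ ξ`. Since `ξ` is a
nonzero multiple of `(-a, e)`, the second derivative of `λ ↦ d (ω + λ ξ)` is a positive continuous factor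
times `(a - b)² P(z) + 2 a b (P(z) - e Q(z))`. This vanishes at `λ = 0`, and its derivative there is
`2 a² (P - e Q)'(z) dz/dλ`, where `dz/dλ` is a nonzero multiple of `e + z`.

It remains to see that `(P - e Q)' ≠ 0` at a zero of `P - e Q` (`exists_deriv_ne_zero`). With
`G = (1 - z²) A₁ - z A₀` one has `P - e Q = -(e + z) (G + e (σ - 1) A₀)`, and the recurrence between
`A₀`, `A₁`, `A₂` (`coshInt_recurrence`) shows that the derivative of the second factor is
`-(1 - 1/σ) ∫ (cosh y - e) (cosh y - z)^(-1/σ - 1) dy < 0`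
(`coshInt_combination_pos`).
-/

open Real MeasureTheory

/-- The parameter region `Ω = {(ω₀,ω₁) : ω₁² < 4ω₀}`. -/
def OmegaSet : Set (ℝ × ℝ) := {ω : ℝ × ℝ | ω.2 ^ 2 < 4 * ω.1}

/-- `κ_ω = √(4ω₀ − ω₁²)` as a function of `ω = (ω₀, ω₁)`. -/
noncomputable def kappa (ω : ℝ × ℝ) : ℝ := Real.sqrt (4 * ω.1 - ω.2 ^ 2)

/-- `κ̃_ω = 2^{1/σ−2} σ⁻¹ (1+σ)^{1/σ} κ_ω^{2/σ−2} ω₀^{−1/(2σ)−1/2}`. -/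
noncomputable def kappaT (σ : ℝ) (ω : ℝ × ℝ) : ℝ :=
  (2 : ℝ) ^ (1 / σ - 2) * σ⁻¹ * (1 + σ) ^ (1 / σ) * (kappa ω) ^ (2 / σ - 2) *
    ω.1 ^ (-(1 / (2 * σ)) - 1 / 2)

/-- The integral `α_{n,ω}` as a function of `ω = (ω₀, ω₁)`. -/
noncomputable def alphaP (σ : ℝ) (n : ℕ) (ω : ℝ × ℝ) : ℝ :=
  ∫ x in Set.Ioi (0 : ℝ),
    (Real.cosh (σ * kappa ω * x) - ω.2 / (2 * Real.sqrt ω.1)) ^ (-(1 / σ) - (n : ℝ))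

/-- Partial derivative in the first coordinate. -/
noncomputable def pd0 (f : ℝ × ℝ → ℝ) (ω : ℝ × ℝ) : ℝ := fderiv ℝ f ω (1, 0)

/-- Partial derivative in the second coordinate. -/
noncomputable def pd1 (f : ℝ × ℝ → ℝ) (ω : ℝ × ℝ) : ℝ := fderiv ℝ f ω (0, 1)

/-- The Hessian matrix of `d : ℝ × ℝ → ℝ` at `ω`. -/
noncomputable def hess (d : ℝ × ℝ → ℝ) (ω : ℝ × ℝ) : Matrix (Fin 2) (Fin 2) ℝ :=
  !![pd0 (pd0 d) ω, pd0 (pd1 d) ω; pd1 (pd0 d) ω, pd1 (pd1 d) ω]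

/-- The profile integral `∫₀^∞ (cosh y - z)^q dy`; rescaling `x = y / (σ κ)` expresses
`α_n` through it with `q = -1/σ - n` and `z = ω₁ / (2 √ω₀)`. -/
noncomputable def coshInt (q z : ℝ) : ℝ :=
  ∫ y in Set.Ioi (0 : ℝ), (Real.cosh y - z) ^ q

/-! ### The profile integrals: derivative, recurrence, positivity -/

lemma cosh_sub_pos {z : ℝ} (hz : z < 1) (y : ℝ) : 0 < Real.cosh y - z := by
  have := Real.one_le_cosh y
  linarith

lemma exp_le_cosh_sub {z r y : ℝ} (hr0 : 0 ≤ r) (hr : r < 1) (hz : z ≤ r) :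
    (1 - r) / 2 * Real.exp y ≤ Real.cosh y - z := by
  have h1 := Real.one_le_cosh y
  have h2 : Real.exp y / 2 ≤ Real.cosh y := by
    rw [Real.cosh_eq]; have := Real.exp_pos (-y); linarith
  nlinarith

lemma cosh_sub_rpow_le {z r y q : ℝ} (hr0 : 0 ≤ r) (hr : r < 1) (hz : z ≤ r) (hq : q ≤ 0) :
    (Real.cosh y - z) ^ q ≤ ((1 - r) / 2) ^ q * Real.exp (q * y) := by
  have h0 : 0 < (1 - r) / 2 := by linarith
  have := Real.rpow_le_rpow_of_nonpos (by positivity) (exp_le_cosh_sub (y := y) hr0 hr hz) hq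
  rwa [Real.mul_rpow h0.le (Real.exp_pos y).le, ← Real.exp_mul, mul_comm y q] at this

lemma continuous_cosh_sub_rpow {z : ℝ} (hz : z < 1) (q : ℝ) :
    Continuous fun y : ℝ => (Real.cosh y - z) ^ q :=
  (Real.continuous_cosh.sub continuous_const).rpow_const
    fun y => Or.inl (cosh_sub_pos hz y).ne'

lemma integrableOn_exp_bound {q : ℝ} (hq : q < 0) (C : ℝ) :
    IntegrableOn (fun y : ℝ => C * Real.exp (q * y)) (Set.Ioi 0) :=
  (integrableOn_exp_mul_Ioi hq 0).const_mul C

lemma integrableOn_cosh_sub_rpow {z q : ℝ} (hz : z < 1) (hq : q < 0) :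
    IntegrableOn (fun y : ℝ => (Real.cosh y - z) ^ q) (Set.Ioi 0) := by
  refine Integrable.mono' (integrableOn_exp_bound hq (((1 - max z 0) / 2) ^ q))
    (continuous_cosh_sub_rpow hz q).aestronglyMeasurable (ae_of_all _ fun y => ?_)
  rw [Real.norm_of_nonneg (Real.rpow_nonneg (cosh_sub_pos hz y).le _)]
  exact cosh_sub_rpow_le (le_max_right _ _) (max_lt hz one_pos) (le_max_left _ _) hq.le

lemma hasDerivAt_coshInt {z q : ℝ} (hz : z < 1) (hq : q < 0) :
    HasDerivAt (coshInt q) (-q * coshInt (q - 1) z) z := by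
  obtain ⟨r, hr1, hr2⟩ := exists_between (max_lt hz one_pos)
  have hzr : z < r := (le_max_left _ _).trans_lt hr1
  have hr0 : 0 ≤ r := (le_max_right _ _).trans hr1.le
  have key := hasDerivAt_integral_of_dominated_loc_of_deriv_le
    (μ := volume.restrict (Set.Ioi (0 : ℝ)))
    (F := fun z y => (Real.cosh y - z) ^ q)
    (F' := fun z y => -q * (Real.cosh y - z) ^ (q - 1)) (x₀ := z)
    (s := Set.Iio r) (bound := fun y => -q * (((1 - r) / 2) ^ (q - 1) * Real.exp ((q - 1) * y)))
    (Iio_mem_nhds hzr) ?_ (integrableOn_cosh_sub_rpow hz hq)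
    (((continuous_cosh_sub_rpow hz (q - 1)).const_mul (-q)).aestronglyMeasurable)
    (ae_of_all _ fun y x hx => ?_)
    ((integrableOn_exp_bound (by linarith) _).const_mul _)
    (ae_of_all _ fun y x hx => ?_)
  · have h := key.2
    rw [integral_const_mul] at h
    exact h
  · filter_upwards [Iio_mem_nhds hz] with x hx
    exact (continuous_cosh_sub_rpow hx q).aestronglyMeasurable
  · have hx' : x < r := hx
    have hp := cosh_sub_pos (hx'.trans hr2) y
    rw [norm_mul, Real.norm_of_nonneg (by linarith : 0 ≤ -q),
      Real.norm_of_nonneg (Real.rpow_nonneg hp.le _)]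
    exact mul_le_mul_of_nonneg_left
      (cosh_sub_rpow_le hr0 hr2 hx'.le (by linarith)) (by linarith)
  · have hx' : x < r := hx
    have hp := cosh_sub_pos (hx'.trans hr2) y
    have := ((hasDerivAt_id x).const_sub (Real.cosh y)).rpow_const (p := q) (Or.inl hp.ne')
    exact this.congr_deriv (by simp)

/-- The integrated derivative of `sinh y (cosh y - z)^(q-1)`, which vanishes at `0` and `∞`. -/
lemma coshInt_recurrence {z q : ℝ} (hz : z < 1) (hq : q < 0) :
    (1 - q) * (1 - z ^ 2) * coshInt (q - 2) z =
      -q * coshInt q z + (1 - 2 * q) * z * coshInt (q - 1) z := by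
  have i0 := integrableOn_cosh_sub_rpow hz hq
  have i1 := integrableOn_cosh_sub_rpow hz (show q - 1 < 0 by linarith)
  have i2 := integrableOn_cosh_sub_rpow hz (show q - 2 < 0 by linarith)
  have key := integral_Ioi_of_hasDerivAt_of_tendsto
    (f := fun y => Real.sinh y * (Real.cosh y - z) ^ (q - 1))
    (f' := fun y => q * (Real.cosh y - z) ^ q + (2 * q - 1) * z * (Real.cosh y - z) ^ (q - 1)
      + (1 - q) * (1 - z ^ 2) * (Real.cosh y - z) ^ (q - 2)) (a := 0) (m := 0) ?_ ?_ ?_ ?_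
  · have e1 := integral_add ((i0.const_mul q).add (i1.const_mul ((2 * q - 1) * z)))
      (i2.const_mul ((1 - q) * (1 - z ^ 2)))
    have e2 := integral_add (i0.const_mul q) (i1.const_mul ((2 * q - 1) * z))
    simp only [Pi.add_apply, integral_const_mul] at e1 e2
    rw [e1, e2] at key
    simp only [Real.sinh_zero] at key
    unfold coshInt
    linarith
  · exact (Real.continuous_sinh.mul (continuous_cosh_sub_rpow hz _)).continuousWithinAt
  · intro y _
    have hp := cosh_sub_pos hz y
    have h1 := (Real.hasDerivAt_sinh y).mul
      (((Real.hasDerivAt_cosh y).sub_const z).rpow_const (p := q - 1) (Or.inl hp.ne'))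
    refine h1.congr_deriv ?_
    have a1 : (Real.cosh y - z) ^ (q - 1) = (Real.cosh y - z) ^ (q - 2) * (Real.cosh y - z) := by
      rw [← Real.rpow_add_one hp.ne']; congr 1; ring
    have a0 : (Real.cosh y - z) ^ q = (Real.cosh y - z) ^ (q - 2) * (Real.cosh y - z) ^ 2 := by
      rw [← Real.rpow_add_natCast hp.ne']; congr 1; push_cast; ring
    have a2 : q - 1 - 1 = q - 2 := by ring
    rw [a2, a0, a1]
    have hs := Real.cosh_sq y
    linear_combination ((1 - q) * (Real.cosh y - z) ^ (q - 2)) * hs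
  · exact ((i0.const_mul q).add (i1.const_mul _)).add (i2.const_mul _)
  · have hm0 : (0 : ℝ) ≤ max z 0 := le_max_right _ _
    have hm1 : max z 0 < 1 := max_lt hz one_pos
    have hlim : Filter.Tendsto (fun y : ℝ => ((1 - max z 0) / 2) ^ (q - 1) * Real.exp (q * y))
        Filter.atTop (nhds 0) := by
      have : Filter.Tendsto (fun y : ℝ => Real.exp (q * y)) Filter.atTop (nhds 0) :=
        Real.tendsto_exp_atBot.comp (Filter.tendsto_id.const_mul_atTop_of_neg hq)
      simpa using this.const_mul (((1 - max z 0) / 2) ^ (q - 1))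
    refine squeeze_zero' ?_ ?_ hlim
    · filter_upwards [Filter.eventually_ge_atTop 0] with y hy
      exact mul_nonneg (Real.sinh_nonneg_iff.2 hy) (Real.rpow_nonneg (cosh_sub_pos hz y).le _)
    · filter_upwards [Filter.eventually_ge_atTop 0] with y hy
      have h1 : Real.sinh y ≤ Real.exp y := by
        rw [Real.sinh_eq]
        have := Real.exp_pos (-y); have := Real.exp_pos y; linarith
      have h2 := cosh_sub_rpow_le (y := y) hm0 hm1 (le_max_left z 0)
        (show q - 1 ≤ 0 by linarith)
      calc _ ≤ Real.exp y * (((1 - max z 0) / 2) ^ (q - 1) * Real.exp ((q - 1) * y)) :=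
            mul_le_mul h1 h2 (Real.rpow_nonneg (cosh_sub_pos hz y).le _) (Real.exp_pos y).le
        _ = _ := by
            rw [show q * y = y + (q - 1) * y by ring, Real.exp_add]; ring

lemma coshInt_pos {z q : ℝ} (hz : z < 1) (hq : q < 0) : 0 < coshInt q z := by
  unfold coshInt
  rw [setIntegral_pos_iff_support_of_nonneg_ae
    (ae_of_all _ fun y => Real.rpow_nonneg (cosh_sub_pos hz y).le _)
    (integrableOn_cosh_sub_rpow hz hq)]
  have : Function.support (fun y : ℝ => (Real.cosh y - z) ^ q) = Set.univ := by
    ext y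
    simp [(Real.rpow_pos_of_pos (cosh_sub_pos hz y) q).ne']
  rw [this]
  simp

/-- The left-hand side is `∫ (cosh y - e) (cosh y - z)^(q-1) dy`. -/
lemma coshInt_combination_pos {z q e : ℝ} (hz : z < 1) (hq : q < 0) (he : e ≤ 1) :
    0 < coshInt q z + (z - e) * coshInt (q - 1) z := by
  have i0 := integrableOn_cosh_sub_rpow hz hq
  have i1 := integrableOn_cosh_sub_rpow hz (show q - 1 < 0 by linarith)
  have e2 := integral_add i0 (i1.const_mul (z - e))
  simp only [integral_const_mul] at e2
  unfold coshInt
  rw [← e2]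
  have hpt : ∀ y : ℝ, (Real.cosh y - z) ^ q + (z - e) * (Real.cosh y - z) ^ (q - 1) =
      (Real.cosh y - e) * (Real.cosh y - z) ^ (q - 1) := fun y => by
    have hp := cosh_sub_pos hz y
    have a1 : (Real.cosh y - z) ^ q = (Real.cosh y - z) ^ (q - 1) * (Real.cosh y - z) := by
      rw [← Real.rpow_add_one hp.ne']; congr 1; ring
    rw [a1]; ring
  have hi : IntegrableOn (fun y : ℝ => (Real.cosh y - z) ^ q +
      (z - e) * (Real.cosh y - z) ^ (q - 1)) (Set.Ioi 0) := i0.add (i1.const_mul (z - e))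
  rw [setIntegral_pos_iff_support_of_nonneg_ae _ hi]
  · refine lt_of_lt_of_le ?_ (measure_mono (s := Set.Ioi (0 : ℝ)) fun y hy => ⟨?_, hy⟩)
    · simp
    · have hp := Real.rpow_pos_of_pos (cosh_sub_pos hz y) (q - 1)
      have : 1 < Real.cosh y := Real.one_lt_cosh.2 (ne_of_gt hy)
      rw [Function.mem_support, hpt]
      exact (mul_pos (by linarith) hp).ne'
  · refine ae_of_all _ fun y => ?_
    have hp := Real.rpow_pos_of_pos (cosh_sub_pos hz y) (q - 1)
    have := Real.one_le_cosh y
    simp only [Pi.zero_apply, hpt]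
    exact mul_nonneg (by linarith) hp.le

/-! ### The Hessian entries in terms of the profile integrals -/

lemma kappa_pos {ω : ℝ × ℝ} (h : ω ∈ OmegaSet) : 0 < kappa ω := by
  have : ω.2 ^ 2 < 4 * ω.1 := h
  exact Real.sqrt_pos.2 (by linarith)

lemma fst_pos {ω : ℝ × ℝ} (h : ω ∈ OmegaSet) : 0 < ω.1 := by
  have : ω.2 ^ 2 < 4 * ω.1 := h
  nlinarith [sq_nonneg ω.2]

lemma alphaP_eq {σ : ℝ} (hσ : 0 < σ) (n : ℕ) {ω : ℝ × ℝ} (h : ω ∈ OmegaSet) :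
    alphaP σ n ω = (σ * kappa ω)⁻¹ * coshInt (-(1 / σ) - n) (ω.2 / (2 * √ω.1)) := by
  have := integral_comp_mul_left_Ioi
    (fun y => (Real.cosh y - ω.2 / (2 * √ω.1)) ^ (-(1 / σ) - (n : ℝ))) 0
    (mul_pos hσ (kappa_pos h))
  simpa [alphaP, coshInt] using this

/-- Up to the factor `8 κ̃ √ω₀ / (σ κ)`, the entry `∂²_{ω₀} d` as a function of `z`. -/
noncomputable def profP (σ z : ℝ) : ℝ :=
  (z ^ 2 - σ + 1) * coshInt (-(1 / σ)) z - z * (1 - z ^ 2) * coshInt (-(1 / σ) - 1) z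

/-- Up to the factor `8 κ̃ ω₀ / (σ κ)`, the entry `∂_{ω₀}∂_{ω₁} d` as a function of `z`. -/
noncomputable def profQ (σ z : ℝ) : ℝ :=
  z * (σ - 2) * coshInt (-(1 / σ)) z + (1 - z ^ 2) * coshInt (-(1 / σ) - 1) z

lemma kappa_sq {ω : ℝ × ℝ} (h : ω ∈ OmegaSet) :
    kappa ω ^ 2 = 4 * √ω.1 ^ 2 * (1 - (ω.2 / (2 * √ω.1)) ^ 2) := by
  have h0 := fst_pos h
  have h' : ω.2 ^ 2 < 4 * ω.1 := h
  have hb := Real.sqrt_pos.2 h0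
  rw [kappa, Real.sq_sqrt (by linarith)]
  have := Real.sq_sqrt h0.le
  field_simp
  linear_combination -16 * this

lemma entry00 {σ : ℝ} (hσ : 0 < σ) {ω : ℝ × ℝ} (h : ω ∈ OmegaSet) :
    kappaT σ ω / √ω.1 * (2 * ω.2 ^ 2 - 8 * (σ - 1) * ω.1) * alphaP σ 0 ω -
      kappaT σ ω / ω.1 * (kappa ω) ^ 2 * ω.2 * alphaP σ 1 ω =
    8 * (kappaT σ ω * (σ * kappa ω)⁻¹) * √ω.1 * profP σ (ω.2 / (2 * √ω.1)) := by
  have hb := Real.sqrt_pos.2 (fst_pos h)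
  have hs := Real.sq_sqrt (fst_pos h).le
  rw [alphaP_eq hσ 0 h, alphaP_eq hσ 1 h, kappa_sq h]
  set b := √ω.1
  set z := ω.2 / (2 * b) with hz
  have h2 : ω.2 = 2 * z * b := by rw [hz]; field_simp
  rw [h2, ← hs]
  simp only [profP, Nat.cast_zero, Nat.cast_one, sub_zero]
  set w := (σ * kappa ω)⁻¹
  field_simp
  ring

lemma entry01 {σ : ℝ} (hσ : 0 < σ) {ω : ℝ × ℝ} (h : ω ∈ OmegaSet) :
    4 * kappaT σ ω * ω.2 * (σ - 2) * √ω.1 * alphaP σ 0 ω +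
      2 * kappaT σ ω * (kappa ω) ^ 2 * alphaP σ 1 ω =
    8 * (kappaT σ ω * (σ * kappa ω)⁻¹) * √ω.1 ^ 2 * profQ σ (ω.2 / (2 * √ω.1)) := by
  have hb := Real.sqrt_pos.2 (fst_pos h)
  rw [alphaP_eq hσ 0 h, alphaP_eq hσ 1 h, kappa_sq h]
  set b := √ω.1
  set z := ω.2 / (2 * b) with hz
  have h2 : ω.2 = 2 * z * b := by rw [hz]; field_simp
  rw [h2]
  simp only [profQ, Nat.cast_zero, Nat.cast_one, sub_zero]
  ring

lemma kappaT_pos {σ : ℝ} (hσ : 0 < σ) {ω : ℝ × ℝ} (h : ω ∈ OmegaSet) : 0 < kappaT σ ω := by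
  have := kappa_pos h
  have := fst_pos h
  unfold kappaT
  positivity

lemma continuousAt_kappaT_factor {σ : ℝ} (hσ : 0 < σ) {ω : ℝ × ℝ} (h : ω ∈ OmegaSet) :
    ContinuousAt (fun w => kappaT σ w * (σ * kappa w)⁻¹ * √w.1) ω := by
  have hk := kappa_pos h
  have h0 := fst_pos h
  have ck : ContinuousAt kappa ω := by unfold kappa; fun_prop
  have c1 : ContinuousAt (fun w : ℝ × ℝ => kappa w ^ (2 / σ - 2)) ω :=
    ck.rpow_const (Or.inl hk.ne')
  have c2 : ContinuousAt (fun w : ℝ × ℝ => w.1 ^ (-(1 / (2 * σ)) - 1 / 2)) ω :=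
    continuousAt_fst.rpow_const (Or.inl h0.ne')
  have c3 : ContinuousAt (fun w : ℝ × ℝ => (σ * kappa w)⁻¹) ω :=
    (continuousAt_const.mul ck).inv₀ (mul_pos hσ hk).ne'
  have c4 : ContinuousAt (fun w : ℝ × ℝ => √w.1) ω := by fun_prop
  unfold kappaT
  exact (((continuousAt_const.mul c1).mul c2).mul c3).mul c4

lemma hasDerivAt_coshInt_one {σ z : ℝ} (hσ : 1 < σ) (hz : z ∈ Set.Ioo (-1 : ℝ) 1) :
    HasDerivAt (coshInt (-(1 / σ) - 1))
      ((1 / σ * coshInt (-(1 / σ)) z + (1 + 2 * (1 / σ)) * z * coshInt (-(1 / σ) - 1) z)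
        / (1 - z ^ 2)) z := by
  have hs : 0 < 1 / σ := by positivity
  have h := hasDerivAt_coshInt hz.2 (show -(1 / σ) - 1 < 0 by linarith)
  have hr := coshInt_recurrence hz.2 (show -(1 / σ) < 0 by linarith)
  have hz2 : (1 - z ^ 2) ≠ 0 := by nlinarith [hz.1, hz.2]
  convert h using 1
  rw [div_eq_iff hz2, show -(1 / σ) - 1 - 1 = -(1 / σ) - 2 by ring]
  linear_combination -hr

/-- If `P - e Q` vanishes at `z`, with `e = ±1`, then its derivative there does not: the
factorization `P - e Q = -(e + z) (G + e (σ - 1) A₀)`, with `A_n = coshInt (-1/σ - n)` and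
`G = (1 - z²) A₁ - z A₀`, has a strictly decreasing second factor. -/
lemma exists_deriv_ne_zero {σ z e : ℝ} (hσ : 1 < σ) (hz : z ∈ Set.Ioo (-1 : ℝ) 1)
    (he : e = 1 ∨ e = -1) (h0 : profP σ z - e * profQ σ z = 0) :
    ∃ c, c ≠ 0 ∧ HasDerivAt (fun x => profP σ x - e * profQ σ x) c z := by
  have hs : 0 < 1 / σ := by positivity
  have hs1 : 1 / σ < 1 := by rw [div_lt_one (by linarith)]; exact hσ
  have he2 : e ^ 2 = 1 := by rcases he with rfl | rfl <;> norm_num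
  have he1 : e ≤ 1 := by rcases he with rfl | rfl <;> norm_num
  have hez : e + z ≠ 0 := by rcases he with rfl | rfl <;> intro h <;> linarith [hz.1, hz.2]
  have hz2 : (1 - z ^ 2) ≠ 0 := by nlinarith [hz.1, hz.2]
  have d0 := hasDerivAt_coshInt hz.2 (show -(1 / σ) < 0 by linarith)
  have d1 := hasDerivAt_coshInt_one hσ hz
  have hpos := coshInt_combination_pos hz.2 (show -(1 / σ) < 0 by linarith) he1
  have hfac : (fun x => profP σ x - e * profQ σ x) = fun x =>
      -((e + x) * ((1 - x ^ 2) * coshInt (-(1 / σ) - 1) x +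
        (e * (σ - 1) - x) * coshInt (-(1 / σ)) x)) := by
    funext x
    simp only [profP, profQ]
    linear_combination (σ - 1) * coshInt (-(1 / σ)) x * he2
  have h0' := congrFun hfac z
  simp only [h0] at h0'
  have h0'' : (1 - z ^ 2) * coshInt (-(1 / σ) - 1) z +
        (e * (σ - 1) - z) * coshInt (-(1 / σ)) z = 0 := by
    have := neg_eq_zero.1 h0'.symm
    exact (mul_eq_zero.1 this).resolve_left hez
  have dsq : HasDerivAt (fun x : ℝ => 1 - x ^ 2) (-(2 * z)) z := by
    simpa using (hasDerivAt_pow 2 z).const_sub 1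
  have dF := (dsq.mul d1).add (((hasDerivAt_id z).const_sub (e * (σ - 1))).mul d0)
  have dR := (((hasDerivAt_id z).const_add e).mul dF).neg
  refine ⟨(e + z) * (1 - 1 / σ) *
    (coshInt (-(1 / σ)) z + (z - e) * coshInt (-(1 / σ) - 1) z), ?_, ?_⟩
  · exact mul_ne_zero (mul_ne_zero hez (by linarith)) hpos.ne'
  · rw [hfac]
    refine dR.congr_deriv ?_
    simp only [Pi.add_apply, Pi.mul_apply, id]
    rw [mul_div_cancel₀ _ hz2, h0'']
    field_simp
    ring

/-! ### Second derivatives along a line -/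

lemma hasDerivAt_line {f : ℝ × ℝ → ℝ} {ω ξ : ℝ × ℝ} {t : ℝ}
    (hf : DifferentiableAt ℝ f (ω + t • ξ)) :
    HasDerivAt (fun s : ℝ => f (ω + s • ξ))
      (ξ.1 * pd0 f (ω + t • ξ) + ξ.2 * pd1 f (ω + t • ξ)) t := by
  have hl : HasDerivAt (fun s : ℝ => ω + s • ξ) ξ t := by
    simpa using ((hasDerivAt_id t).smul_const ξ).const_add ω
  have h := hf.hasFDerivAt.comp_hasDerivAt t hl
  refine h.congr_deriv ?_
  conv_lhs => rw [show ξ = ξ.1 • ((1 : ℝ), (0 : ℝ)) + ξ.2 • ((0 : ℝ), (1 : ℝ)) by ext <;> simp]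
  rw [map_add, map_smul, map_smul]
  simp [pd0, pd1]

lemma pd_symm {d : ℝ × ℝ → ℝ} {U : Set (ℝ × ℝ)} (hU : IsOpen U) (hd : ContDiffOn ℝ 3 d U)
    {w : ℝ × ℝ} (hw : w ∈ U) : pd1 (pd0 d) w = pd0 (pd1 d) w := by
  have hc : ContDiffAt ℝ 3 d w := hd.contDiffAt (hU.mem_nhds hw)
  have hs : IsSymmSndFDerivAt ℝ d w :=
    hc.isSymmSndFDerivAt (by simp; norm_num)
  have hdf : DifferentiableAt ℝ (fderiv ℝ d) w :=
    (hc.fderiv_right (m := 2) (by norm_num)).differentiableAt (by norm_num)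
  have e : ∀ u v : ℝ × ℝ, fderiv ℝ (fun x => fderiv ℝ d x u) w v = fderiv ℝ (fderiv ℝ d) w v u := by
    intro u v
    have := (hdf.hasFDerivAt.clm_apply (hasFDerivAt_const u w)).fderiv
    rw [this]; simp
  change fderiv ℝ (fun x => fderiv ℝ d x (1, 0)) w (0, 1) =
    fderiv ℝ (fun x => fderiv ℝ d x (0, 1)) w (1, 0)
  rw [e, e]
  exact hs _ _

lemma differentiableAt_pd {d : ℝ × ℝ → ℝ} {U : Set (ℝ × ℝ)} (hU : IsOpen U)
    (hd : ContDiffOn ℝ 3 d U) {w : ℝ × ℝ} (hw : w ∈ U) :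
    DifferentiableAt ℝ (pd0 d) w ∧ DifferentiableAt ℝ (pd1 d) w := by
  have hc : ContDiffAt ℝ 3 d w := hd.contDiffAt (hU.mem_nhds hw)
  have hdf : DifferentiableAt ℝ (fderiv ℝ d) w :=
    (hc.fderiv_right (m := 2) (by norm_num)).differentiableAt (by norm_num)
  exact ⟨hdf.clm_apply (differentiableAt_const _), hdf.clm_apply (differentiableAt_const _)⟩

lemma iteratedDeriv_three_line {d : ℝ × ℝ → ℝ} {U : Set (ℝ × ℝ)} (hU : IsOpen U)
    (hd : ContDiffOn ℝ 3 d U) {ω ξ : ℝ × ℝ} (hω : ω ∈ U) :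
    iteratedDeriv 3 (fun s : ℝ => d (ω + s • ξ)) 0 =
      deriv (fun s : ℝ => ξ.1 ^ 2 * pd0 (pd0 d) (ω + s • ξ) +
        2 * ξ.1 * ξ.2 * pd0 (pd1 d) (ω + s • ξ) + ξ.2 ^ 2 * pd1 (pd1 d) (ω + s • ξ)) 0 := by
  have hcont : Continuous fun s : ℝ => ω + s • ξ := by fun_prop
  have hV : IsOpen ((fun s : ℝ => ω + s • ξ) ⁻¹' U) := hU.preimage hcont
  have h0 : (0 : ℝ) ∈ (fun s : ℝ => ω + s • ξ) ⁻¹' U := by simpa using hω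
  have h1 : ∀ s ∈ (fun s : ℝ => ω + s • ξ) ⁻¹' U,
      deriv (fun s : ℝ => d (ω + s • ξ)) s =
        ξ.1 * pd0 d (ω + s • ξ) + ξ.2 * pd1 d (ω + s • ξ) := fun s hs =>
    (hasDerivAt_line ((hd.contDiffAt (hU.mem_nhds hs)).differentiableAt (by norm_num))).deriv
  have h2 : ∀ s ∈ (fun s : ℝ => ω + s • ξ) ⁻¹' U,
      deriv (deriv (fun s : ℝ => d (ω + s • ξ))) s =
        ξ.1 ^ 2 * pd0 (pd0 d) (ω + s • ξ) +
        2 * ξ.1 * ξ.2 * pd0 (pd1 d) (ω + s • ξ) + ξ.2 ^ 2 * pd1 (pd1 d) (ω + s • ξ) := by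
    intro s hs
    have he : deriv (fun s : ℝ => d (ω + s • ξ)) =ᶠ[nhds s] fun s =>
        ξ.1 * pd0 d (ω + s • ξ) + ξ.2 * pd1 d (ω + s • ξ) := by
      filter_upwards [hV.mem_nhds hs] with s hs using h1 s hs
    obtain ⟨q0, q1⟩ := differentiableAt_pd hU hd hs
    have h := ((hasDerivAt_line q0).const_mul ξ.1).add ((hasDerivAt_line q1).const_mul ξ.2)
    refine he.deriv_eq.trans (h.deriv.trans ?_)
    rw [pd_symm hU hd hs]
    ring
  rw [iteratedDeriv_succ, iteratedDeriv_succ, iteratedDeriv_one]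
  refine Filter.EventuallyEq.deriv_eq ?_
  filter_upwards [hV.mem_nhds h0] with s hs using h2 s hs

/-- Product rule at a zero of the second factor, where the first need only be continuous. -/
lemma hasDerivAt_mul_of_zero {K L : ℝ → ℝ} {l x : ℝ} (hK : ContinuousAt K x)
    (hL : HasDerivAt L l x) (h0 : L x = 0) : HasDerivAt (fun t => K t * L t) (K x * l) x := by
  rw [hasDerivAt_iff_tendsto_slope] at hL ⊢
  have := (hK.tendsto.mono_left nhdsWithin_le_nhds).mul hL
  refine this.congr fun t => ?_
  simp only [slope_def_field, h0]
  ring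

theorem third_derivative_nonzero_in_borderline_case
    (σ z₀ ω₀ : ℝ) (hσ₁ : 1 < σ) (hσ₂ : σ < 2)
    (hz : z₀ ∈ Set.Ioo (-1 : ℝ) 1) (hω₀ : 0 < ω₀)
    (ω : ℝ × ℝ) (hω : ω = (ω₀, 2 * z₀ * Real.sqrt ω₀))
    (d : ℝ × ℝ → ℝ) (U : Set (ℝ × ℝ)) (hUΩ : U ⊆ OmegaSet)
    (hU : IsOpen U) (hωU : ω ∈ U) (hd : ContDiffOn ℝ 3 d U)
    (h00 : ∀ ω' ∈ U,
      pd0 (pd0 d) ω' =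
        kappaT σ ω' / Real.sqrt ω'.1 * (2 * ω'.2 ^ 2 - 8 * (σ - 1) * ω'.1) *
            alphaP σ 0 ω' -
          kappaT σ ω' / ω'.1 * (kappa ω') ^ 2 * ω'.2 * alphaP σ 1 ω')
    (h11 : ∀ ω' ∈ U, pd1 (pd1 d) ω' = ω'.1 * pd0 (pd0 d) ω')
    (h01 : ∀ ω' ∈ U,
      pd0 (pd1 d) ω' =
        4 * kappaT σ ω' * ω'.2 * (σ - 2) * Real.sqrt ω'.1 * alphaP σ 0 ω' +
          2 * kappaT σ ω' * (kappa ω') ^ 2 * alphaP σ 1 ω')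
    (hdet : (hess d ω).det = 0)
    (ξ : ℝ × ℝ) (hξ : ξ = (-(ω.1 * pd0 (pd0 d) ω), pd0 (pd1 d) ω)) :
    iteratedDeriv 3 (fun lam : ℝ => d (ω + lam • ξ)) 0 ≠ 0 := by
  have hσ : 0 < σ := by linarith
  have hs : 0 < 1 / σ := by positivity
  have ha : 0 < √ω₀ := Real.sqrt_pos.2 hω₀
  have ha2 : √ω₀ ^ 2 = ω₀ := Real.sq_sqrt hω₀.le
  have hz2 : 1 - z₀ ^ 2 > 0 := by nlinarith [hz.1, hz.2]
  have hωΩ : ω ∈ OmegaSet := hUΩ hωU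
  have hω1 : ω.1 = ω₀ := by rw [hω]
  have hω2 : ω.2 = 2 * z₀ * √ω₀ := by rw [hω]
  have hzω : ω.2 / (2 * √ω.1) = z₀ := by rw [hω1, hω2]; field_simp
  have hK : 0 < kappaT σ ω * (σ * kappa ω)⁻¹ := by
    have := kappaT_pos hσ hωΩ
    have := kappa_pos hωΩ
    positivity
  have hA0 : 0 < coshInt (-(1 / σ)) z₀ := coshInt_pos hz.2 (by linarith)
  have hP := h00 ω hωU
  rw [entry00 hσ hωΩ, hzω, hω1] at hP
  have hQ := h01 ω hωU
  rw [entry01 hσ hωΩ, hzω, hω1] at hQ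
  -- The determinant condition says that `P² = Q²` at `z₀`.
  have hdet2 : (√ω₀ * pd0 (pd0 d) ω) ^ 2 = pd0 (pd1 d) ω ^ 2 := by
    have h := hdet
    rw [hess, Matrix.det_fin_two_of, pd_symm hU hd hωU, h11 ω hωU, hω1] at h
    rw [mul_pow, ha2]
    linarith
  have hPQ : profP σ z₀ ^ 2 = profQ σ z₀ ^ 2 := by
    rw [hP, hQ] at hdet2
    have hne : (8 * (kappaT σ ω * (σ * kappa ω)⁻¹) * √ω₀ ^ 2) ^ 2 ≠ 0 := by positivity
    refine mul_left_cancel₀ hne ?_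
    linear_combination hdet2
  obtain ⟨e, he, hPe⟩ : ∃ e : ℝ, (e = 1 ∨ e = -1) ∧ profP σ z₀ = e * profQ σ z₀ := by
    rcases sq_eq_sq_iff_eq_or_eq_neg.1 hPQ with h | h
    · exact ⟨1, Or.inl rfl, by linarith⟩
    · exact ⟨-1, Or.inr rfl, by linarith⟩
  have he2 : e ^ 2 = 1 := by rcases he with rfl | rfl <;> norm_num
  -- `P + z Q = (1 - σ) (1 - z²) A₀`, so `P` and `Q` cannot both vanish.
  have hP0 : profP σ z₀ ≠ 0 := by
    intro h
    have hQ0 : profQ σ z₀ = 0 := by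
      rw [h] at hPQ
      exact pow_eq_zero_iff (two_ne_zero) |>.1 (by linarith)
    have hid : profP σ z₀ + z₀ * profQ σ z₀ =
        -((σ - 1) * (1 - z₀ ^ 2) * coshInt (-(1 / σ)) z₀) := by
      simp only [profP, profQ]; ring
    have : 0 < (σ - 1) * (1 - z₀ ^ 2) * coshInt (-(1 / σ)) z₀ :=
      mul_pos (mul_pos (by linarith) hz2) hA0
    rw [h, hQ0] at hid
    linarith
  set t := pd0 (pd0 d) ω with ht
  have ht0 : t ≠ 0 := by
    rw [hP]
    exact mul_ne_zero (by positivity) hP0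
  have hξ1 : ξ.1 = -(√ω₀ ^ 2 * t) := by rw [hξ, hω1, ha2]
  have hξ2 : ξ.2 = e * √ω₀ * t := by
    rw [hξ, hP, hPe, hQ]
    linear_combination -(8 * (kappaT σ ω * (σ * kappa ω)⁻¹) * √ω₀ ^ 2 * profQ σ z₀) * he2
  obtain ⟨c, hc0, hc⟩ := exists_deriv_ne_zero hσ₁ hz he (by linarith)
  rw [iteratedDeriv_three_line hU hd hωU]
  have hcont : Continuous fun s : ℝ => ω + s • ξ := by fun_prop
  have hmem : (fun s : ℝ => ω + s • ξ) ⁻¹' U ∈ nhds (0 : ℝ) :=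
    (hU.preimage hcont).mem_nhds (by simpa using hωU)
  -- The second derivative along the line, with `b = √ω₀'` and `z` evaluated at the moving point.
  have hform : (fun s : ℝ => ξ.1 ^ 2 * pd0 (pd0 d) (ω + s • ξ) +
        2 * ξ.1 * ξ.2 * pd0 (pd1 d) (ω + s • ξ) + ξ.2 ^ 2 * pd1 (pd1 d) (ω + s • ξ))
      =ᶠ[nhds 0] fun s : ℝ =>
        (8 * t ^ 2 * √ω₀ ^ 2 * (kappaT σ (ω + s • ξ) * (σ * kappa (ω + s • ξ))⁻¹
          * √(ω + s • ξ).1)) *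
        ((√ω₀ - √(ω + s • ξ).1) ^ 2 * profP σ ((ω + s • ξ).2 / (2 * √(ω + s • ξ).1)) +
          2 * √ω₀ * √(ω + s • ξ).1 *
            (profP σ ((ω + s • ξ).2 / (2 * √(ω + s • ξ).1)) -
              e * profQ σ ((ω + s • ξ).2 / (2 * √(ω + s • ξ).1)))) := by
    filter_upwards [hmem] with s hs
    have hsU : ω + s • ξ ∈ U := hs
    have hb2 := Real.sq_sqrt (fst_pos (hUΩ hsU)).le
    rw [h11 _ hsU, h00 _ hsU, h01 _ hsU, entry00 hσ (hUΩ hsU), entry01 hσ (hUΩ hsU), hξ1, hξ2]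
    generalize ω + s • ξ = w at *
    rw [show ∀ p : ℝ, w.1 * p = √w.1 ^ 2 * p from fun p => by rw [hb2]]
    linear_combination (√ω₀ ^ 2 * t ^ 2 * √w.1 ^ 3 * 8 * (kappaT σ w * (σ * kappa w)⁻¹) *
      profP σ (w.2 / (2 * √w.1))) * he2
  rw [hform.deriv_eq]
  have hpt0 : ω + (0 : ℝ) • ξ = ω := by simp
  have dl1 : HasDerivAt (fun s : ℝ => (ω + s • ξ).1) ξ.1 0 := by
    simpa using ((hasDerivAt_id (0 : ℝ)).mul_const ξ.1).const_add ω.1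
  have dl2 : HasDerivAt (fun s : ℝ => (ω + s • ξ).2) ξ.2 0 := by
    simpa using ((hasDerivAt_id (0 : ℝ)).mul_const ξ.2).const_add ω.2
  have hb0 : (ω + (0 : ℝ) • ξ).1 = ω₀ := by rw [hpt0, hω1]
  have hb0' : (ω + (0 : ℝ) • ξ).2 = 2 * z₀ * √ω₀ := by rw [hpt0, hω2]
  have hzp : (ω + (0 : ℝ) • ξ).2 / (2 * √(ω + (0 : ℝ) • ξ).1) = z₀ := by rw [hpt0, hzω]
  have hzq : 2 * z₀ * √ω₀ / (2 * √ω₀) = z₀ := by field_simp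
  have db := dl1.sqrt (by rw [hb0]; exact hω₀.ne')
  have dz := dl2.div (db.const_mul 2) (by rw [hb0]; positivity)
  have dPd : DifferentiableAt ℝ (profP σ) z₀ := by
    have d0 := (hasDerivAt_coshInt hz.2 (show -(1 / σ) < 0 by linarith)).differentiableAt
    have d1 := (hasDerivAt_coshInt_one hσ₁ hz).differentiableAt
    unfold profP
    fun_prop
  have dP := HasDerivAt.comp (0 : ℝ) (h₂ := profP σ) (by
    have := dPd.hasDerivAt
    rw [← hzp] at this
    exact this) dz
  have dR := HasDerivAt.comp (0 : ℝ) (h₂ := fun x => profP σ x - e * profQ σ x) (by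
    rw [← hzp] at hc
    exact hc) dz
  have dL := (((db.const_sub (√ω₀)).pow 2).mul dP).add ((db.const_mul (2 * √ω₀)).mul dR)
  have cK : ContinuousAt (fun s : ℝ =>
      8 * t ^ 2 * √ω₀ ^ 2 * (kappaT σ (ω + s • ξ) * (σ * kappa (ω + s • ξ))⁻¹
          * √(ω + s • ξ).1)) 0 := by
    refine continuousAt_const.mul ?_
    have h := continuousAt_kappaT_factor hσ hωΩ
    rw [← hpt0] at h
    exact ContinuousAt.comp (f := fun s : ℝ => ω + s • ξ) h hcont.continuousAt
  have hfin := hasDerivAt_mul_of_zero cK dL (by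
    simp only [Pi.add_apply, Pi.mul_apply, Pi.pow_apply, Function.comp, Pi.div_apply, hb0, hb0',
      hzq]
    rw [hPe]; ring)
  have hfin' := hfin.deriv
  refine ne_of_eq_of_ne hfin' ?_
  refine mul_ne_zero ?_ ?_
  · rw [hpt0, hω1]; positivity
  · simp only [Pi.pow_apply, Function.comp, Pi.div_apply, hb0, hb0',
      hzq, sub_self]
    rw [hξ1, hξ2]
    have hez : e + z₀ ≠ 0 := by
      rcases he with rfl | rfl <;> intro h <;> linarith [hz.1, hz.2]
    have : c * ((e + z₀) * t / 2) * (2 * √ω₀ ^ 2) ≠ 0 := by positivity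
    convert this using 1
    field_simp
    linear_combination (-2 * √ω₀ ^ 2) * hPe
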